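/- The number of plus irreducible 321-avoiding permutations of length n for n = 0,1,...,10 is 1, 1, 1, 2, 4, 9, 21, 51, 127, 323, 835. -/

import Mathlib

def Avoids321 {n : ℕ} (π : Equiv.Perm (Fin n)) : Prop :=
  ¬ ∃ i j k : Fin n, i < j ∧ j < k ∧ π k < π j ∧ π j < π i

/-- `π` is plus irreducible: no position `i` has `π (i+1) = π i + 1`. -/
def PlusIrr {n : ℕ} (π : Equiv.Perm (Fin n)) : Prop :=
  ¬ ∃ i : ℕ, ∃ h : i + 1 < n,
    (π ⟨i + 1, h⟩ : ℕ) = (π ⟨i, Nat.lt_of_succ_lt h⟩ : ℕ) + 1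

/-!
Call `i` a succession of `π` if `π (i + 1) = π i + 1`. Contracting the largest element of a set `S`
of prescribed successions keeps the other ones and does not affect 321-avoidance, so by induction
the 321-avoiding permutations of length `n` with successions at all of `S` are equinumerous with the
321-avoiding permutations of length `n - #S`. There are `catalan (n - #S)` of these, and
inclusion-exclusion over `S` counts the permutations without successions.

The Catalan count is refined by the length of an increasing prefix: deleting the value `0`
yields the recurrence of the ballot numbers.
-/

open Equiv Finset

variable {n : ℕ}

/-! ### Inserting an entry into a permutation -/

/-- The permutation obtained from `σ` by inserting a new entry with value `a` at position `p`;
the other positions and values are shifted by `Fin.succAbove`. -/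
def insertEntry (p a : Fin (n + 1)) (σ : Perm (Fin n)) : Perm (Fin (n + 1)) :=
  (finSuccEquiv' p).trans (σ.optionCongr.trans (finSuccEquiv' a).symm)

@[simp]
theorem insertEntry_apply_self (p a : Fin (n + 1)) (σ : Perm (Fin n)) :
    insertEntry p a σ p = a := by
  simp [insertEntry]

@[simp]
theorem insertEntry_apply_succAbove (p a : Fin (n + 1)) (σ : Perm (Fin n)) (i : Fin n) :
    insertEntry p a σ (p.succAbove i) = a.succAbove (σ i) := by
  simp [insertEntry]

theorem insertEntry_injective (p a : Fin (n + 1)) : Function.Injective (insertEntry p a) := by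
  intro σ τ h
  ext i : 1
  have hi := DFunLike.congr_fun h (p.succAbove i)
  simpa using hi

theorem insertEntry_inj {p q a : Fin (n + 1)} {σ τ : Perm (Fin n)} :
    insertEntry p a σ = insertEntry q a τ ↔ p = q ∧ σ = τ := by
  refine ⟨fun h ↦ ?_, fun ⟨hp, hσ⟩ ↦ hp ▸ hσ ▸ rfl⟩
  obtain rfl : p = q := (insertEntry q a τ).injective <| by
    rw [insertEntry_apply_self q, ← h, insertEntry_apply_self]
  exact ⟨rfl, insertEntry_injective p a h⟩

theorem exists_insertEntry_eq (π : Perm (Fin (n + 1))) (p : Fin (n + 1)) :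
    ∃ σ, insertEntry p (π p) σ = π := by
  have hinj : Function.Injective fun x : Fin (n + 1) × Perm (Fin n) ↦ insertEntry p x.1 x.2 := by
    rintro ⟨a, σ⟩ ⟨b, τ⟩ h
    obtain rfl : a = b := by simpa using DFunLike.congr_fun h p
    exact congrArg (Prod.mk a) (insertEntry_injective p a h)
  have hcard : Fintype.card (Fin (n + 1) × Perm (Fin n)) = Fintype.card (Perm (Fin (n + 1))) := by
    simp [Fintype.card_perm, Nat.factorial_succ]
  obtain ⟨⟨a, σ⟩, rfl⟩ := ((Fintype.bijective_iff_injective_and_card _).2 ⟨hinj, hcard⟩).2 π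
  exact ⟨σ, by simp⟩

theorem Avoids321.of_insertEntry {p a : Fin (n + 1)} {σ : Perm (Fin n)}
    (h : Avoids321 (insertEntry p a σ)) : Avoids321 σ := by
  rintro ⟨i, j, k, hij, hjk, hkj, hji⟩
  exact h ⟨p.succAbove i, p.succAbove j, p.succAbove k, by simpa, by simpa, by simpa, by simpa⟩

/-! ### Counting 321-avoiding permutations -/

/-- The 321-avoiding permutations whose first `k` entries are increasing. They are counted by the
ballot numbers, a refinement of the Catalan numbers that satisfies a simple recurrence. -/
def prefixIncreasing (n k : ℕ) : Set (Perm (Fin n)) :=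
  {σ | Avoids321 σ ∧ StrictMonoOn σ {i | (i : ℕ) < k}}

theorem mem_prefixIncreasing {k : ℕ} {σ : Perm (Fin n)} :
    σ ∈ prefixIncreasing n k ↔ Avoids321 σ ∧ StrictMonoOn σ {i | (i : ℕ) < k} :=
  Iff.rfl

theorem mem_prefixIncreasing_zero {σ : Perm (Fin n)} : σ ∈ prefixIncreasing n 0 ↔ Avoids321 σ := by
  simp [mem_prefixIncreasing, StrictMonoOn]

theorem prefixIncreasing_anti (n : ℕ) : Antitone (prefixIncreasing n) :=
  fun _ _ hkl _ hσ ↦ ⟨hσ.1, hσ.2.mono fun _ hi ↦ lt_of_lt_of_le hi hkl⟩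

theorem avoids321_insertEntry_zero_iff {p : Fin (n + 1)} {σ : Perm (Fin n)} :
    Avoids321 (insertEntry p 0 σ) ↔ σ ∈ prefixIncreasing n p := by
  constructor
  · refine fun h ↦ ⟨h.of_insertEntry, fun i _ j hj hij ↦ ?_⟩
    by_contra hσ
    have hlt : σ j < σ i := (not_lt.1 hσ).lt_of_ne (σ.injective.ne hij.ne')
    refine h ⟨p.succAbove i, p.succAbove j, p, by simpa, ?_, by simp, by simpa⟩
    exact (Fin.succAbove_lt_iff_castSucc_lt _ _).2 hj
  · rintro ⟨hσ, hmono⟩ ⟨i, j, k, hij, hjk, hkj, hji⟩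
    have ne_of_pos {x y} (h : insertEntry p 0 σ y < insertEntry p 0 σ x) : x ≠ p := by
      rintro rfl
      simp at h
    obtain ⟨i, rfl⟩ := Fin.exists_succAbove_eq (ne_of_pos hji)
    obtain ⟨j, rfl⟩ := Fin.exists_succAbove_eq (ne_of_pos hkj)
    simp only [insertEntry_apply_succAbove, Fin.succAbove_lt_succAbove_iff] at hij hji
    rcases eq_or_ne k p with rfl | hk
    · have hj : j.castSucc < k := (Fin.succAbove_lt_iff_castSucc_lt _ _).1 hjk
      have hi : (i : ℕ) < k := (Fin.lt_def.1 hij).trans hj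
      exact hji.not_gt (hmono hi hj hij)
    · obtain ⟨k, rfl⟩ := Fin.exists_succAbove_eq hk
      simp only [insertEntry_apply_succAbove, Fin.succAbove_lt_succAbove_iff] at hjk hkj
      exact hσ ⟨i, j, k, hij, hjk, hkj, hji⟩

theorem strictMonoOn_insertEntry {k : ℕ} {p a : Fin (n + 1)} {σ : Perm (Fin n)} (hk : k ≤ p)
    (hσ : StrictMonoOn σ {i | (i : ℕ) < k}) :
    StrictMonoOn (insertEntry p a σ) {i | (i : ℕ) < k} := by
  have exists_old {x : Fin (n + 1)} (hx : (x : ℕ) < k) :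
      ∃ i : Fin n, (i : ℕ) < k ∧ p.succAbove i = x :=
    ⟨⟨x, by omega⟩, hx, Fin.succAbove_of_castSucc_lt _ _ (hx.trans_le hk)⟩
  intro x hx y hy hxy
  obtain ⟨i, hi, rfl⟩ := exists_old hx
  obtain ⟨j, hj, rfl⟩ := exists_old hy
  simp only [insertEntry_apply_succAbove, Fin.succAbove_lt_succAbove_iff] at hxy ⊢
  exact hσ hi hj hxy

theorem strictMonoOn_insertEntry_zero_zero_iff {k : ℕ} {σ : Perm (Fin n)} :
    StrictMonoOn (insertEntry 0 0 σ) {i | (i : ℕ) < k + 1} ↔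
      StrictMonoOn σ {i | (i : ℕ) < k} := by
  have hzero : insertEntry 0 0 σ 0 = 0 := insertEntry_apply_self ..
  have hsucc (i : Fin n) : insertEntry 0 0 σ i.succ = (σ i).succ :=
    insertEntry_apply_succAbove 0 0 σ i
  simp [StrictMonoOn, Fin.forall_fin_succ, hzero, hsucc]

theorem insertEntry_zero_mem_prefixIncreasing_iff {k : ℕ} {p : Fin (n + 1)} {σ : Perm (Fin n)} :
    insertEntry p 0 σ ∈ prefixIncreasing (n + 1) (k + 1) ↔
      p = 0 ∧ σ ∈ prefixIncreasing n k ∨ k + 1 ≤ p ∧ σ ∈ prefixIncreasing n p := by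
  rw [mem_prefixIncreasing, avoids321_insertEntry_zero_iff]
  rcases eq_or_ne p 0 with rfl | hp
  · rw [strictMonoOn_insertEntry_zero_zero_iff, Fin.val_zero, mem_prefixIncreasing_zero,
      ← mem_prefixIncreasing]
    simp
  · simp only [hp, false_and, false_or]
    constructor
    · rintro ⟨hσ, hmono⟩
      refine ⟨?_, hσ⟩
      by_contra! hpk
      simpa using hmono (a := 0) k.succ_pos hpk (Fin.pos_iff_ne_zero.2 hp)
    · rintro ⟨hk, hσ⟩
      exact ⟨hσ, strictMonoOn_insertEntry hk (prefixIncreasing_anti n hk hσ).2⟩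

theorem insertEntry_zero_mem_prefixIncreasing_diff_iff {k : ℕ} {p : Fin (n + 1)}
    {σ : Perm (Fin n)} :
    insertEntry p 0 σ ∈ prefixIncreasing (n + 1) (k + 1) \ prefixIncreasing (n + 1) (k + 2) ↔
      σ ∈ prefixIncreasing n k ∧
        (σ ∈ prefixIncreasing n (k + 1) ∧ (p : ℕ) = k + 1 ∨
          σ ∉ prefixIncreasing n (k + 1) ∧ p = 0) := by
  rw [Set.mem_sdiff, insertEntry_zero_mem_prefixIncreasing_iff,
    insertEntry_zero_mem_prefixIncreasing_iff]
  have hk := @prefixIncreasing_anti n _ _ k.le_succ σ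
  constructor
  · rintro ⟨⟨rfl, hσ⟩ | ⟨hp, hσ⟩, hnot⟩
    · exact ⟨hσ, Or.inr ⟨fun h ↦ hnot (Or.inl ⟨rfl, h⟩), rfl⟩⟩
    · have hσ' := prefixIncreasing_anti n hp hσ
      have hp' : ¬ k + 2 ≤ (p : ℕ) := fun h ↦ hnot (Or.inr ⟨h, hσ⟩)
      exact ⟨hk hσ', Or.inl ⟨hσ', by omega⟩⟩
  · rintro ⟨hσ, ⟨hσ', hp⟩ | ⟨hσ', rfl⟩⟩
    · have hp0 : p ≠ 0 := by
        rintro rfl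
        simp at hp
      simp [hp, hp0, hσ']
    · simp [hσ, hσ']

theorem ncard_prefixIncreasing_diff {k : ℕ} (hk : k < n) :
    (prefixIncreasing (n + 1) (k + 1) \ prefixIncreasing (n + 1) (k + 2)).ncard =
      (prefixIncreasing n k).ncard := by
  classical
  -- The position of `0` is determined by the other entries, so deleting `0` loses no information.
  let site (σ : Perm (Fin n)) : Fin (n + 1) :=
    if σ ∈ prefixIncreasing n (k + 1) then ⟨k + 1, by omega⟩ else 0
  have hmem (p : Fin (n + 1)) (σ : Perm (Fin n)) : insertEntry p 0 σ ∈
      prefixIncreasing (n + 1) (k + 1) \ prefixIncreasing (n + 1) (k + 2) ↔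
        σ ∈ prefixIncreasing n k ∧ p = site σ := by
    rw [insertEntry_zero_mem_prefixIncreasing_diff_iff]
    by_cases hσ : σ ∈ prefixIncreasing n (k + 1)
    · rw [show site σ = ⟨k + 1, by omega⟩ from if_pos hσ]
      simp only [hσ, true_and, not_true, false_and, or_false, Fin.ext_iff]
    · rw [show site σ = 0 from if_neg hσ]
      simp [hσ]
  symm
  refine Set.ncard_congr (fun σ _ ↦ insertEntry (site σ) 0 σ) (fun σ hσ ↦ (hmem _ σ).2 ⟨hσ, rfl⟩)
    (fun σ τ _ _ h ↦ (insertEntry_inj.1 h).2) fun π hπ ↦ ?_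
  obtain ⟨σ, hσ⟩ := exists_insertEntry_eq π (π.symm 0)
  rw [apply_symm_apply] at hσ
  obtain ⟨hσk, hsite⟩ := (hmem _ σ).1 (hσ ▸ hπ)
  exact ⟨σ, hσk, hsite ▸ hσ⟩

theorem ncard_prefixIncreasing_succ {k : ℕ} (hk : k < n) :
    (prefixIncreasing (n + 1) (k + 1)).ncard =
      (prefixIncreasing (n + 1) (k + 2)).ncard + (prefixIncreasing n k).ncard := by
  rw [← Set.ncard_sdiff_add_ncard_of_subset (prefixIncreasing_anti _ (Nat.le_succ _)), add_comm,
    ncard_prefixIncreasing_diff hk]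

theorem prefixIncreasing_zero (n : ℕ) : prefixIncreasing n 0 = prefixIncreasing n 1 := by
  refine Set.Subset.antisymm (fun σ hσ ↦ ⟨hσ.1, fun i _ j (hj : (j : ℕ) < 1) hij ↦ ?_⟩)
    (prefixIncreasing_anti n zero_le_one)
  omega

theorem prefixIncreasing_self (n : ℕ) : prefixIncreasing n n = {1} := by
  refine Set.eq_singleton_iff_unique_mem.2 ⟨⟨?_, fun i _ j _ hij ↦ hij⟩, fun σ hσ ↦ ?_⟩
  · rintro ⟨i, j, k, hij, -, -, hji⟩
    exact hij.not_gt hji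
  · have hmono : StrictMono σ := fun i j hij ↦ hσ.2 i.2 j.2 hij
    have hid : ⇑σ = id := (hmono.range_inj strictMono_id).1 (by simp [σ.surjective.range_eq])
    exact DFunLike.coe_injective hid

/-- The closed form of the ballot numbers, with its subtraction moved to the other side. -/
theorem ncard_prefixIncreasing_add_choose (m k : ℕ) :
    (prefixIncreasing (m + k) k).ncard + (2 * m + k).choose (m + k + 1) =
      (2 * m + k).choose (m + k) := by
  induction m generalizing k with
  | zero =>
    rw [Nat.zero_add, prefixIncreasing_self, Set.ncard_singleton]
    simp
  | succ m ihm =>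
    induction k with
    | zero =>
      have hm := ihm 1
      have hpascal := Nat.choose_succ_succ' (2 * m + 1) m
      have hpascal' := Nat.choose_succ_succ' (2 * m + 1) (m + 1)
      have hsymm := Nat.choose_symm_half m
      rw [add_zero, add_zero, prefixIncreasing_zero, show 2 * (m + 1) = 2 * m + 1 + 1 by ring]
      omega
    | succ k ihk =>
      have hm := ihm (k + 2)
      rw [show 2 * m + (k + 2) = 2 * (m + 1) + k by ring,
        show m + (k + 2) = m + 1 + k + 1 by ring] at hm
      have hrec := ncard_prefixIncreasing_succ (n := m + 1 + k) (k := k) (by omega)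
      have hpascal := Nat.choose_succ_succ' (2 * (m + 1) + k) (m + 1 + k)
      have hpascal' := Nat.choose_succ_succ' (2 * (m + 1) + k) (m + 1 + k + 1)
      rw [show m + 1 + (k + 1) = m + 1 + k + 1 from rfl,
        show 2 * (m + 1) + (k + 1) = 2 * (m + 1) + k + 1 from rfl]
      omega

theorem ncard_avoids321 (n : ℕ) : {π : Perm (Fin n) | Avoids321 π}.ncard = catalan n := by
  have hset : {π : Perm (Fin n) | Avoids321 π} = prefixIncreasing n 0 :=
    Set.ext fun _ ↦ mem_prefixIncreasing_zero.symm
  have hballot : (prefixIncreasing n 0).ncard + (2 * n).choose (n + 1) = n.centralBinom :=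
    ncard_prefixIncreasing_add_choose n 0
  have hchoose : (2 * n).choose (n + 1) * (n + 1) = n.centralBinom * n := by
    rw [Nat.choose_succ_right_eq, Nat.centralBinom, two_mul, Nat.add_sub_cancel]
  rw [hset, ← Nat.mul_left_cancel_iff n.succ_pos, Nat.succ_eq_add_one,
    succ_mul_catalan_eq_centralBinom]
  linarith [congrArg (· * (n + 1)) hballot]

/-! ### Successions -/

/-- `i` is a succession of `π` if the values at positions `i` and `i + 1` are consecutive and
increasing; plus irreducible permutations are those without successions. Positions are natural
numbers, so that successions of permutations of different lengths can be compared. -/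
def IsSuccession (π : Perm (Fin n)) (i : ℕ) : Prop :=
  ∃ h : i + 1 < n, (π ⟨i + 1, h⟩ : ℕ) = π ⟨i, Nat.lt_of_succ_lt h⟩ + 1

theorem plusIrr_iff_forall_lt {π : Perm (Fin n)} :
    PlusIrr π ↔ ∀ i < n - 1, ¬ IsSuccession π i := by
  simp only [PlusIrr, IsSuccession, not_exists]
  exact ⟨fun h i _ ↦ h i, fun h i hi ↦ h i (by omega) hi⟩

/-- The permutation obtained from `σ` by replacing the entry at position `i` with two entries of
consecutive increasing values, at positions `i` and `i + 1`. -/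
def inflate (i : Fin n) (σ : Perm (Fin n)) : Perm (Fin (n + 1)) :=
  insertEntry i.castSucc (σ i).castSucc σ

theorem inflate_apply_castSucc (i : Fin n) (σ : Perm (Fin n)) :
    inflate i σ i.castSucc = (σ i).castSucc :=
  insertEntry_apply_self ..

theorem inflate_apply_succ (i : Fin n) (σ : Perm (Fin n)) : inflate i σ i.succ = (σ i).succ := by
  have h := insertEntry_apply_succAbove i.castSucc (σ i).castSucc σ i
  rwa [Fin.succAbove_castSucc_self, Fin.succAbove_castSucc_self] at h

theorem predAbove_inflate_apply (i : Fin n) (σ : Perm (Fin n)) (x : Fin (n + 1)) :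
    (σ i).predAbove (inflate i σ x) = σ (i.predAbove x) := by
  obtain rfl | ⟨j, rfl⟩ := Fin.eq_self_or_eq_succAbove i.castSucc x <;> simp [inflate]

theorem inflate_injective (i : Fin n) : Function.Injective (inflate i) := by
  intro σ τ h
  have hi : (σ i).castSucc = (τ i).castSucc := by
    simpa only [inflate_apply_castSucc] using DFunLike.congr_fun h i.castSucc
  rw [inflate, inflate, hi] at h
  exact (insertEntry_inj.1 h).2

theorem exists_inflate_eq {π : Perm (Fin (n + 1))} {i : Fin n} (h : IsSuccession π i) :
    ∃ σ, inflate i σ = π := by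
  obtain ⟨σ, hσ⟩ := exists_insertEntry_eq π i.castSucc
  have hsucc := insertEntry_apply_succAbove i.castSucc (π i.castSucc) σ i
  rw [hσ, Fin.succAbove_castSucc_self] at hsucc
  have hi : (π i.succ : ℕ) = π i.castSucc + 1 := h.2
  have hvalue : π i.castSucc = (σ i).castSucc := by
    rw [hsucc, Fin.succAbove] at hi
    ext
    split_ifs at hi with hlt
    · rw [Fin.lt_def] at hlt
      omega
    · simpa using hi.symm
  exact ⟨σ, by rw [inflate, ← hvalue, hσ]⟩

theorem isSuccession_inflate_self (i : Fin n) (σ : Perm (Fin n)) :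
    IsSuccession (inflate i σ) i := by
  refine ⟨by omega, ?_⟩
  change (inflate i σ i.succ : ℕ) = inflate i σ i.castSucc + 1
  simp [inflate_apply_succ, inflate_apply_castSucc]

theorem val_inflate_castSucc {i j : Fin n} (hj : j ≤ i) (σ : Perm (Fin n)) :
    (inflate i σ j.castSucc : ℕ) = if σ j ≤ σ i then (σ j : ℕ) else σ j + 1 := by
  obtain rfl | hlt := hj.eq_or_lt
  · simp [inflate_apply_castSucc]
  · have hle : σ j ≤ σ i ↔ σ j < σ i := (σ.injective.ne hlt.ne).le_iff_lt
    rw [← Fin.succAbove_of_castSucc_lt i.castSucc j hlt, inflate, insertEntry_apply_succAbove,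
      Fin.succAbove, apply_ite Fin.val]
    simp [hle]

theorem isSuccession_inflate_iff_of_lt {i : Fin n} {j : ℕ} (hj : j < i) {σ : Perm (Fin n)} :
    IsSuccession (inflate i σ) j ↔ IsSuccession σ j := by
  have hjn : j + 1 < n := by omega
  have hx := val_inflate_castSucc (j := ⟨j, by omega⟩) (Fin.le_def.2 hj.le) σ
  have hy := val_inflate_castSucc (j := ⟨j + 1, hjn⟩) (Fin.le_def.2 hj) σ
  have hne : σ ⟨j, by omega⟩ ≠ σ i := σ.injective.ne (Fin.ne_of_lt hj)
  simp only [Fin.castSucc_mk, Fin.le_def] at hx hy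
  simp only [IsSuccession, hjn, hjn.trans n.lt_succ_self, exists_true_left, hx, hy]
  split_ifs <;> omega

theorem val_predAbove (i : Fin n) (x : Fin (n + 1)) :
    (i.predAbove x : ℕ) = if (i : ℕ) < x then (x - 1 : ℕ) else x := by
  simp only [Fin.predAbove, apply_dite Fin.val, Fin.val_pred, Fin.coe_castPred, dite_eq_ite,
    Fin.lt_def, Fin.val_castSucc]

theorem eq_castSucc_and_eq_succ_of_predAbove_eq {i : Fin n} {x y : Fin (n + 1)} (hxy : x < y)
    (h : i.predAbove x = i.predAbove y) : x = i.castSucc ∧ y = i.succ := by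
  rw [Fin.lt_def] at hxy
  simp only [Fin.ext_iff, val_predAbove, Fin.val_castSucc, Fin.val_succ] at h ⊢
  split_ifs at h <;> omega

theorem lt_of_inflate_lt {i : Fin n} {σ : Perm (Fin n)} {x y : Fin (n + 1)} (hxy : x < y)
    (h : inflate i σ y < inflate i σ x) :
    i.predAbove x < i.predAbove y ∧ σ (i.predAbove y) < σ (i.predAbove x) := by
  have hpos : i.predAbove x ≤ i.predAbove y := Fin.predAbove_right_monotone i hxy.le
  have hval : σ (i.predAbove y) ≤ σ (i.predAbove x) := by
    simpa only [predAbove_inflate_apply] using Fin.predAbove_right_monotone (σ i) h.le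
  have hne : i.predAbove x ≠ i.predAbove y := by
    intro heq
    obtain ⟨rfl, rfl⟩ := eq_castSucc_and_eq_succ_of_predAbove_eq hxy heq
    rw [inflate_apply_castSucc, inflate_apply_succ] at h
    exact h.not_gt Fin.castSucc_lt_succ
  exact ⟨hpos.lt_of_ne hne, hval.lt_of_ne (σ.injective.ne hne.symm)⟩

theorem avoids321_inflate_iff {i : Fin n} {σ : Perm (Fin n)} :
    Avoids321 (inflate i σ) ↔ Avoids321 σ := by
  refine ⟨Avoids321.of_insertEntry, fun hσ ↦ ?_⟩
  rintro ⟨x, y, z, hxy, hyz, hzy, hyx⟩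
  obtain ⟨hxy', hyx'⟩ := lt_of_inflate_lt hxy hyx
  obtain ⟨hyz', hzy'⟩ := lt_of_inflate_lt hyz hzy
  exact hσ ⟨_, _, _, hxy', hyz', hzy', hyx'⟩

theorem ncard_avoids321_forall_isSuccession {S : Finset ℕ} (hS : S ⊆ range (n - 1)) :
    {π : Perm (Fin n) | Avoids321 π ∧ ∀ i ∈ S, IsSuccession π i}.ncard = catalan (n - #S) := by
  induction S using Finset.induction_on_max generalizing n with
  | empty => simp [ncard_avoids321]
  | insert i S hmax ih =>
    obtain ⟨hi, hS⟩ := Finset.insert_subset_iff.1 hS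
    rw [mem_range] at hi
    obtain ⟨m, rfl⟩ : ∃ m, n = m + 1 := ⟨n - 1, by omega⟩
    rw [Nat.add_sub_cancel] at hi hS
    have himage : {π : Perm (Fin (m + 1)) | Avoids321 π ∧ ∀ j ∈ insert i S, IsSuccession π j} =
        inflate ⟨i, hi⟩ '' {σ | Avoids321 σ ∧ ∀ j ∈ S, IsSuccession σ j} := by
      have hold (σ) : (∀ j ∈ S, IsSuccession (inflate ⟨i, hi⟩ σ) j) ↔ ∀ j ∈ S, IsSuccession σ j :=
        forall₂_congr fun j hj ↦ isSuccession_inflate_iff_of_lt (hmax j hj)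
      ext π
      constructor
      · rintro ⟨hπ, hsucc⟩
        rw [Finset.forall_mem_insert] at hsucc
        obtain ⟨σ, rfl⟩ := exists_inflate_eq (i := ⟨i, hi⟩) hsucc.1
        exact ⟨σ, ⟨avoids321_inflate_iff.1 hπ, (hold σ).1 hsucc.2⟩, rfl⟩
      · rintro ⟨σ, ⟨hσ, hsucc⟩, rfl⟩
        exact ⟨avoids321_inflate_iff.2 hσ, (Finset.forall_mem_insert ..).2
          ⟨isSuccession_inflate_self _ σ, (hold σ).2 hsucc⟩⟩
    have hS' : S ⊆ range (m - 1) := fun j hj ↦ mem_range.2 (by have := hmax j hj; omega)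
    rw [himage, Set.ncard_image_of_injective _ (inflate_injective _), ih hS',
      card_insert_of_notMem fun h ↦ (hmax i h).false, Nat.add_sub_add_right]

theorem plusIrr_avoids321_counts_general (n : ℕ) :
    (Nat.card {π : Perm (Fin n) // Avoids321 π ∧ PlusIrr π} : ℤ) =
      ∑ m ∈ range (n - 1 + 1), (-1 : ℤ) ^ m * (n - 1).choose m * catalan (n - m) := by
  classical
  let succAt (i : ℕ) : Finset {π : Perm (Fin n) // Avoids321 π} := {π | IsSuccession π.1 i}
  have hcard (P : Perm (Fin n) → Prop) : Nat.card {π // Avoids321 π ∧ P π} =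
      #{π : {π : Perm (Fin n) // Avoids321 π} | P π} := by
    rw [← Nat.card_congr (subtypeSubtypeEquivSubtypeInter _ _), Nat.card_eq_fintype_card,
      Fintype.card_subtype]
  have hirr : Nat.card {π : Perm (Fin n) // Avoids321 π ∧ PlusIrr π} =
      #((range (n - 1)).inf fun i ↦ (succAt i)ᶜ) := by
    rw [hcard]
    congr 1
    ext π
    simp [succAt, Finset.mem_inf, plusIrr_iff_forall_lt]
  have hprescribed (S) (hS : S ∈ (range (n - 1)).powerset) :
      #(S.inf succAt) = catalan (n - #S) := by
    rw [← ncard_avoids321_forall_isSuccession (mem_powerset.1 hS), ← Nat.card_coe_set_eq]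
    refine .trans ?_ (hcard _).symm
    congr 1
    ext π
    simp [succAt, Finset.mem_inf]
  rw [hirr, inclusion_exclusion_card_inf_compl,
    sum_congr rfl fun S hS ↦ by rw [hprescribed S hS],
    sum_powerset_apply_card fun m ↦ (-1 : ℤ) ^ m * catalan (n - m)]
  simp [mul_left_comm, mul_assoc]

/-- The number of plus irreducible 321-avoiding permutations of length
`n = 0, 1, ..., 10` is `1, 1, 1, 2, 4, 9, 21, 51, 127, 323, 835`. -/
theorem plusIrr_avoids321_counts :
    (List.range 11).map
        (fun n => Nat.card {π : Equiv.Perm (Fin n) // Avoids321 π ∧ PlusIrr π}) =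
      [1, 1, 1, 2, 4, 9, 21, 51, 127, 323, 835] := by
  apply List.map_injective_iff.2 (Nat.cast_injective (R := ℤ))
  simp only [List.map_map, Function.comp_def, plusIrr_avoids321_counts_general,
    catalan_eq_centralBinom_div]
  decide
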